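/- arXiv:1906.03021 — 2 statements merged into one kernel-verified Lean document; each statement's English description precedes it below -/
import Mathlib

section
/- For i = 1,…,N let χ_i : ℝ → ℝ be continuous one-dimensional kernels (χ_i ∈ L¹(ℝ), ∑_{k∈ℤ} χ_i(u−k) = 1 for all u, A_{χ_i} := sup_u ∑_{k∈ℤ} |χ_i(u−k)| < +∞ with uniform convergence on compact sets), let m ∈ ℕ, m ≥ 1, χ̄_{i,m}(t) := (1/m)∫_{-m/2}^{m/2} χ_i(t+v) dv. Fix j ∈ {1,…,N}. Let f : ℝ^N → ℝ be bounded and suppose there is a measurable g : ℝ^N → ℝ such that for every x'_j ∈ ℝ^{N−1} the j-th section satisfies f(x'_j,b) − f(x'_j,a) = ∫_a^b g(x'_j,u) du for all a < b (so g is the j-th partial derivative of f along sections). Let K_{w,j} be the sampling-Kantorovich operator with kernel χ^{(j)}(t) := χ_j(t_j) ∏_{i≠j} χ̄_{i,m}(t_i), i.e. (K_{w,j} g)(t) := ∑_{k∈ℤ^N} [w ∫_{k_j/w}^{(k_j+1)/w} g(k₁/w,…,u,…,k_N/w) du] χ^{(j)}(wt − k). Then for every t ∈ ℝ^N, w > 0: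 ∂(S̄^m_w f)/∂t_j (t) = (1/m) ∑_{i=1}^m (K_{w,j} g)(t'_j, t_j − (m − 2(i−1))/(2w)), where (t'_j, s) denotes the point obtained from t by replacing its j-th coordinate with s. -/
open MeasureTheory

/-- The averaged kernel `χ̄_m(t) := (1/m) ∫_{-m/2}^{m/2} χ(t+v) dv`. -/
noncomputable def avgKernel (χ : ℝ → ℝ) (m : ℕ) (t : ℝ) : ℝ :=
  (1 / (m : ℝ)) * ∫ v in (-(m : ℝ) / 2)..((m : ℝ) / 2), χ (t + v)

/-- The `j`-th sampling-Kantorovich type operator based on a kernel `K : ℝ^N → ℝ`: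
`(K_{w,j} g)(t) = ∑_{k∈ℤ^N} [w ∫_{k_j/w}^{(k_j+1)/w} g(k₁/w,…,u,…,k_N/w) du] K(wt − k)`. -/
noncomputable def kantOp {N : ℕ} (K : (Fin N → ℝ) → ℝ) (j : Fin N) (w : ℝ)
    (g : (Fin N → ℝ) → ℝ) (t : Fin N → ℝ) : ℝ :=
  ∑' k : Fin N → ℤ,
    (w * ∫ u in ((k j : ℝ) / w)..(((k j : ℝ) + 1) / w),
      g (Function.update (fun i => (k i : ℝ) / w) j u)) *
    K (fun i => w * t i - (k i : ℝ))

/-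
Put `c k = f (k / w)` and let `G u = ∑ k, c k * K (y - k)` be the lattice series of the mixed kernel
`K = χ^{(j)}`, evaluated at `y = w t` with `j`-th coordinate `u`. Averaging in the `j`-th variable
commutes with the summation, so the sampling series of the product averaged kernel is the moving
average of `G`, and its derivative is `w / m` times the increment of the continuous function `G`
over an interval of length `m`. On the other hand, summation by parts over the lattice identifies
`K_{w,j} g` with `w` times an increment of `G` over an interval of length `1`, and `m` consecutive
such increments telescope.
-/

section ContinuouslySummable

open Filter

/-- An absolutely summable family of continuous functions whose sum of norms is again continuous.
On a locally compact space, Dini's theorem makes this the same as requiring the series of norms to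
converge uniformly on compact sets; the form chosen here is easier to transfer to products and
averages. -/
structure ContinuouslySummable {κ X E : Type*} [TopologicalSpace X] [NormedAddCommGroup E]
    (a : κ → X → E) : Prop where
  continuous : ∀ k, Continuous (a k)
  summable_norm : ∀ x, Summable fun k => ‖a k x‖
  continuous_tsum_norm : Continuous fun x => ∑' k, ‖a k x‖

variable {κ X E : Type*} [TopologicalSpace X] [NormedAddCommGroup E]

theorem continuous_tsum_of_norm_le_of_continuous_tsum [CompleteSpace E] {a : κ → X → E}
    {B : κ → X → ℝ} (ha : ∀ k, Continuous (a k)) (hB : ∀ k, Continuous (B k))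
    (hsum : ∀ x, Summable fun k => B k x) (htsum : Continuous fun x => ∑' k, B k x)
    (hle : ∀ k x, ‖a k x‖ ≤ B k x) : Continuous fun x => ∑' k, a k x := by
  refine continuous_of_locally_uniform_approx_of_continuousAt fun x u hu => ?_
  obtain ⟨ε, hε, hεu⟩ := Metric.mem_uniformity_dist.1 hu
  obtain ⟨s, hs⟩ := (((hsum x).hasSum.const_sub (∑' k, B k x)).eventually
    (gt_mem_nhds ((sub_self (∑' k, B k x)).trans_lt hε))).exists
  -- The tail of the majorant is continuous, so a tail that is small at `x` stays small nearby.
  have htail : Continuous fun y => ∑' k, B k y - ∑ k ∈ s, B k y := by fun_prop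
  refine ⟨_, htail.continuousAt.eventually (gt_mem_nhds hs), fun y => ∑ k ∈ s, a k y,
    by fun_prop, fun y hy => hεu ?_⟩
  have hay : Summable fun k => a k y := .of_norm_bounded (hsum y) (hle · y)
  calc dist (∑' k, a k y) (∑ k ∈ s, a k y)
      = ‖∑' k : {k // k ∉ s}, a k y‖ := by
        rw [dist_eq_norm, ← hay.sum_add_tsum_subtype_compl s, add_sub_cancel_left]
    _ ≤ ∑' k : {k // k ∉ s}, B k y :=
        tsum_of_norm_bounded ((hsum y).subtype (· ∉ s)).hasSum fun k => hle k y
    _ = ∑' k, B k y - ∑ k ∈ s, B k y := by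
        rw [← (hsum y).sum_add_tsum_subtype_compl s, add_sub_cancel_left]
    _ < ε := hy

namespace ContinuouslySummable

theorem of_norm_le {a : κ → X → E} {B : κ → X → ℝ} (ha : ∀ k, Continuous (a k))
    (hB : ∀ k, Continuous (B k)) (hsum : ∀ x, Summable fun k => B k x)
    (htsum : Continuous fun x => ∑' k, B k x) (hle : ∀ k x, ‖a k x‖ ≤ B k x) :
    ContinuouslySummable a where
  continuous := ha
  summable_norm x := .of_nonneg_of_le (fun _ => norm_nonneg _) (hle · x) (hsum x)
  continuous_tsum_norm := continuous_tsum_of_norm_le_of_continuous_tsum (fun k => (ha k).norm)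
    hB hsum htsum fun k x => (norm_norm (a k x)).trans_le (hle k x)

theorem of_tendstoUniformlyOn [LocallyCompactSpace X] {a : κ → X → E}
    (ha : ∀ k, Continuous (a k))
    (hunif : ∀ K : Set X, IsCompact K →
      TendstoUniformlyOn (fun (s : Finset κ) x => ∑ k ∈ s, ‖a k x‖)
        (fun x => ∑' k, ‖a k x‖) atTop K) :
    ContinuouslySummable a where
  continuous := ha
  summable_norm x :=
    ⟨_, (hunif {x} isCompact_singleton).tendsto_at (Set.mem_singleton x)⟩
  continuous_tsum_norm :=
    (tendstoLocallyUniformly_iff_forall_isCompact.2 hunif).continuous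
      (Frequently.of_forall fun _ => by fun_prop)

theorem continuous_tsum [CompleteSpace E] {a : κ → X → E} (h : ContinuouslySummable a) :
    Continuous fun x => ∑' k, a k x :=
  continuous_tsum_of_norm_le_of_continuous_tsum h.continuous (fun k => (h.continuous k).norm)
    h.summable_norm h.continuous_tsum_norm fun _ _ => le_rfl

theorem comp {Y : Type*} [TopologicalSpace Y] {a : κ → X → E} (h : ContinuouslySummable a)
    {φ : Y → X} (hφ : Continuous φ) : ContinuouslySummable fun k y => a k (φ y) where
  continuous k := (h.continuous k).comp hφ
  summable_norm y := h.summable_norm (φ y)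
  continuous_tsum_norm := h.continuous_tsum_norm.comp hφ

theorem bdd_mul {R : Type*} [NormedRing R] {a : κ → X → R} (h : ContinuouslySummable a)
    {c : κ → R} {C : ℝ} (hc : ∀ k, ‖c k‖ ≤ C) : ContinuouslySummable fun k x => c k * a k x :=
  of_norm_le (B := fun k x => C * ‖a k x‖) (fun k => continuous_const.mul (h.continuous k))
    (fun k => continuous_const.mul (h.continuous k).norm)
    (fun x => (h.summable_norm x).mul_left C)
    (by simpa only [tsum_mul_left] using h.continuous_tsum_norm.const_mul C)
    fun k x => norm_mul_le_of_le (hc k) le_rfl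

end ContinuouslySummable

end ContinuouslySummable

section PiProduct

theorem measure_pi_count {ι : Type*} [Fintype ι] {κ : ι → Type*} [∀ i, Countable (κ i)]
    [∀ i, MeasurableSpace (κ i)] [∀ i, MeasurableSingletonClass (κ i)] :
    Measure.pi (fun i => (Measure.count : Measure (κ i))) = Measure.count :=
  Measure.ext_of_singleton fun k => by
    simp only [Measure.pi_singleton, Measure.count_singleton, Finset.prod_const_one]

variable {ι : Type*} [Fintype ι] {κ : ι → Type*} [∀ i, Countable (κ i)]

theorem hasSum_pi_prod {𝕜 : Type*} [RCLike 𝕜] {a : ∀ i, κ i → 𝕜}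
    (ha : ∀ i, Summable fun n => ‖a i n‖) :
    HasSum (fun k : ∀ i, κ i => ∏ i, a i (k i)) (∏ i, ∑' n, a i n) := by
  -- Fubini for the product of the counting measures.
  let _ (i : ι) : MeasurableSpace (κ i) := ⊤
  have hint (i : ι) : Integrable (a i) Measure.count := integrable_count_iff.2 (ha i)
  have hprod : Integrable (fun k : ∀ i, κ i => ∏ i, a i (k i)) Measure.count := by
    simpa only [measure_pi_count] using Integrable.fintype_prod_dep hint
  have htsum : ∑' k : ∀ i, κ i, ∏ i, a i (k i) = ∏ i, ∑' n, a i n := by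
    simpa only [measure_pi_count, integral_countable hprod, integral_countable (hint _),
      Measure.real, Measure.count_singleton, ENNReal.toReal_one, one_smul] using
      integral_fintype_prod_eq_prod a (μ := fun _ => Measure.count)
  exact htsum ▸ (integrable_count_iff.1 hprod).of_norm.hasSum

theorem ContinuouslySummable.pi_prod {X 𝕜 : Type*} [TopologicalSpace X] [NormedField 𝕜]
    {a : ∀ i, κ i → X → 𝕜} (ha : ∀ i, ContinuouslySummable (a i)) :
    ContinuouslySummable fun (k : ∀ i, κ i) x => ∏ i, a i (k i) x := by
  have hsum (x : X) : HasSum (fun k : ∀ i, κ i => ∏ i, ‖a i (k i) x‖) (∏ i, ∑' n, ‖a i n x‖) :=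
    hasSum_pi_prod (a := fun i n => ‖a i n x‖) fun i => by
      simpa only [norm_norm] using (ha i).summable_norm x
  refine ⟨fun k => continuous_finsetProd _ fun i _ => (ha i).continuous (k i), fun x => ?_, ?_⟩
  · simpa only [norm_prod] using (hsum x).summable
  · simpa only [norm_prod, (hsum _).tsum_eq] using
      continuous_finsetProd _ fun i _ => (ha i).continuous_tsum_norm

end PiProduct

section AvgKernel

theorem avgKernel_const_mul (χ : ℝ → ℝ) (m : ℕ) (r u : ℝ) :
    avgKernel (fun v => r * χ v) m u = r * avgKernel χ m u := by
  simp only [avgKernel, intervalIntegral.integral_const_mul, mul_left_comm]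

theorem avgKernel_comp_sub (χ : ℝ → ℝ) (m : ℕ) (d u : ℝ) :
    avgKernel (fun v => χ (v - d)) m u = avgKernel χ m (u - d) := by
  simp only [avgKernel, add_sub_right_comm]

theorem hasDerivAt_avgKernel {χ : ℝ → ℝ} (hχ : Continuous χ) (m : ℕ) (u : ℝ) :
    HasDerivAt (avgKernel χ m) (1 / (m : ℝ) * (χ (u + m / 2) - χ (u - m / 2))) u := by
  have hprim (v : ℝ) : HasDerivAt (fun y => ∫ x in (0 : ℝ)..y, χ x) (χ v) v :=
    hχ.integral_hasStrictDerivAt 0 v |>.hasDerivAt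
  have havg : avgKernel χ m = fun u => 1 / (m : ℝ) *
      ((∫ x in (0 : ℝ)..(u + m / 2), χ x) - ∫ x in (0 : ℝ)..(u - m / 2), χ x) := by
    funext u
    rw [avgKernel, intervalIntegral.integral_comp_add_left, neg_div, ← sub_eq_add_neg,
      intervalIntegral.integral_interval_sub_left (hχ.intervalIntegrable _ _)
        (hχ.intervalIntegrable _ _)]
  rw [havg]
  exact (((hprim _).comp_add_const u _).sub ((hprim _).comp_sub_const u _)).const_mul _

theorem continuous_avgKernel {χ : ℝ → ℝ} (hχ : Continuous χ) (m : ℕ) :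
    Continuous (avgKernel χ m) :=
  continuous_iff_continuousAt.2 fun u => (hasDerivAt_avgKernel hχ m u).continuousAt

theorem norm_avgKernel_le (χ : ℝ → ℝ) (m : ℕ) (u : ℝ) :
    ‖avgKernel χ m u‖ ≤ avgKernel (fun v => ‖χ v‖) m u := by
  have hle : -(m : ℝ) / 2 ≤ m / 2 := by linarith [m.cast_nonneg (α := ℝ)]
  rw [avgKernel, norm_mul, Real.norm_of_nonneg (by positivity)]
  exact mul_le_mul_of_nonneg_left (intervalIntegral.norm_integral_le_integral_norm hle)
    (by positivity)

variable {κ : Type*} [Countable κ] {a : κ → ℝ → ℝ}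

theorem ContinuouslySummable.hasSum_avgKernel (h : ContinuouslySummable a) (m : ℕ) (u : ℝ) :
    HasSum (fun k => avgKernel (a k) m u)
      (avgKernel (fun v => ∑' k, a k v) m u) := by
  refine HasSum.mul_left _ (intervalIntegral.hasSum_integral_of_dominated_convergence
    (fun k v => ‖a k (u + v)‖) (fun k => ?_) (fun k => ?_) ?_ ?_ ?_)
  · exact ((h.continuous k).comp (continuous_const_add u)).aestronglyMeasurable
  · exact .of_forall fun v _ => le_rfl
  · exact .of_forall fun v _ => h.summable_norm (u + v)
  · exact (h.continuous_tsum_norm.comp (continuous_const_add u)).intervalIntegrable _ _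
  · exact .of_forall fun v _ => (h.summable_norm (u + v)).of_norm.hasSum

theorem continuouslySummable_avgKernel (h : ContinuouslySummable a) (m : ℕ) :
    ContinuouslySummable fun k => avgKernel (a k) m := by
  have hnorm : ContinuouslySummable fun k u => ‖a k u‖ :=
    ⟨fun k => (h.continuous k).norm, by simpa only [norm_norm] using h.summable_norm,
      by simpa only [norm_norm] using h.continuous_tsum_norm⟩
  refine .of_norm_le (fun k => continuous_avgKernel (h.continuous k) m)
    (fun k => continuous_avgKernel (hnorm.continuous k) m)
    (fun u => (hnorm.hasSum_avgKernel m u).summable) ?_ fun k => norm_avgKernel_le (a k) m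
  simpa only [(hnorm.hasSum_avgKernel m _).tsum_eq] using
    continuous_avgKernel h.continuous_tsum_norm m

end AvgKernel

section LatticeSeries

variable {ι : Type*}

/-- The generalized sampling series with kernel `K` and coefficients `c` at unit sampling rate. The
sampling series of `f` at rate `w` is `t ↦ latticeSeries K c (w • t)` with `c k = f (k / w)`. -/
noncomputable def latticeSeries (K : (ι → ℝ) → ℝ) (c : (ι → ℤ) → ℝ) (y : ι → ℝ) : ℝ :=
  ∑' k : ι → ℤ, c k * K (fun i => y i - (k i : ℝ))

theorem latticeSeries_add_intCast (K : (ι → ℝ) → ℝ) (c : (ι → ℤ) → ℝ) (y : ι → ℝ) (d : ι → ℤ) :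
    latticeSeries K c (fun i => y i + d i) = latticeSeries K (fun k => c (k + d)) y := by
  rw [latticeSeries, ← (Equiv.addRight d).tsum_eq]
  simp only [latticeSeries, Equiv.coe_addRight, Pi.add_apply, Int.cast_add,
    add_sub_add_right_eq_sub]

variable [Fintype ι] [DecidableEq ι]

/-- The kernel `χ^{(j)}`: the product kernel in which every factor except the `j`-th one is
averaged. -/
noncomputable def mixedKernel (χ : ι → ℝ → ℝ) (m : ℕ) (j : ι) (s : ι → ℝ) : ℝ :=
  χ j (s j) * ∏ l ∈ Finset.univ.erase j, avgKernel (χ l) m (s l)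

variable {χ : ι → ℝ → ℝ}

theorem continuouslySummable_mixedKernel
    (hχ : ∀ i, ContinuouslySummable fun (n : ℤ) u => χ i (u - n)) (m : ℕ) (j : ι) :
    ContinuouslySummable fun (k : ι → ℤ) (y : ι → ℝ) =>
      mixedKernel χ m j (fun i => y i - (k i : ℝ)) := by
  have havg (i : ι) : ContinuouslySummable fun (n : ℤ) u => avgKernel (χ i) m (u - n) := by
    simpa only [← avgKernel_comp_sub] using continuouslySummable_avgKernel (hχ i) m
  have hfactor (i : ι) : ContinuouslySummable fun (n : ℤ) (y : ι → ℝ) =>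
      if i = j then χ i (y i - n) else avgKernel (χ i) m (y i - n) := by
    split_ifs
    exacts [(hχ i).comp (continuous_apply i), (havg i).comp (continuous_apply i)]
  have hprod (k : ι → ℤ) (y : ι → ℝ) : mixedKernel χ m j (fun i => y i - k i) =
      ∏ i, if i = j then χ i (y i - k i) else avgKernel (χ i) m (y i - k i) := by
    rw [← Finset.mul_prod_erase _ _ (Finset.mem_univ j), if_pos rfl, mixedKernel]
    exact congrArg _ (Finset.prod_congr rfl fun l hl => (if_neg (Finset.ne_of_mem_erase hl)).symm)
  simpa only [hprod] using ContinuouslySummable.pi_prod hfactor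

section Update

variable {m : ℕ} {j : ι} {c : (ι → ℤ) → ℝ} {M : ℝ}

theorem continuouslySummable_mul_mixedKernel_update
    (hχ : ∀ i, ContinuouslySummable fun (n : ℤ) u => χ i (u - n)) (hc : ∀ k, |c k| ≤ M)
    (y : ι → ℝ) :
    ContinuouslySummable fun (k : ι → ℤ) u =>
      c k * mixedKernel χ m j (fun i => Function.update y j u i - (k i : ℝ)) :=
  ((continuouslySummable_mixedKernel hχ m j).bdd_mul hc).comp
    (continuous_const.update j continuous_id)

theorem mul_prod_avgKernel_update (χ : ι → ℝ → ℝ) (m : ℕ) (j : ι) (r : ℝ) (k : ι → ℤ)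
    (y : ι → ℝ) (u : ℝ) :
    r * ∏ i, avgKernel (χ i) m (Function.update y j u i - k i) =
      avgKernel (fun v => r * mixedKernel χ m j (fun i => Function.update y j v i - k i)) m u := by
  have hother (v : ℝ) : ∏ l ∈ Finset.univ.erase j, avgKernel (χ l) m (Function.update y j v l - k l)
      = ∏ l ∈ Finset.univ.erase j, avgKernel (χ l) m (y l - k l) :=
    Finset.prod_congr rfl fun l hl => by rw [Function.update_of_ne (Finset.ne_of_mem_erase hl)]
  simp only [mixedKernel, hother, Function.update_self, ← mul_assoc, mul_right_comm _ (χ j _)]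
  rw [avgKernel_const_mul, avgKernel_comp_sub, ← Finset.mul_prod_erase _ _ (Finset.mem_univ j),
    hother, Function.update_self]
  ring

theorem latticeSeries_prod_avgKernel_update
    (hχ : ∀ i, ContinuouslySummable fun (n : ℤ) u => χ i (u - n)) (hc : ∀ k, |c k| ≤ M)
    (y : ι → ℝ) (u : ℝ) :
    latticeSeries (fun s => ∏ i, avgKernel (χ i) m (s i)) c (Function.update y j u) =
      avgKernel (fun v => latticeSeries (mixedKernel χ m j) c (Function.update y j v)) m u := by
  simp only [latticeSeries, mul_prod_avgKernel_update]
  exact ((continuouslySummable_mul_mixedKernel_update hχ hc y).hasSum_avgKernel m u).tsum_eq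

theorem hasDerivAt_latticeSeries_prod_avgKernel
    (hχ : ∀ i, ContinuouslySummable fun (n : ℤ) u => χ i (u - n)) (hc : ∀ k, |c k| ≤ M)
    (y : ι → ℝ) (u : ℝ) :
    HasDerivAt
      (fun v => latticeSeries (fun s => ∏ i, avgKernel (χ i) m (s i)) c (Function.update y j v))
      (1 / (m : ℝ) * (latticeSeries (mixedKernel χ m j) c (Function.update y j (u + m / 2)) -
        latticeSeries (mixedKernel χ m j) c (Function.update y j (u - m / 2)))) u := by
  simp only [latticeSeries_prod_avgKernel_update hχ hc]
  exact hasDerivAt_avgKernel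
    (continuouslySummable_mul_mixedKernel_update hχ hc y).continuous_tsum m u

end Update

end LatticeSeries

section Kantorovich

theorem sub_eq_intervalIntegral_of_forall_lt {E : Type*} [NormedAddCommGroup E] [NormedSpace ℝ E]
    {F G : ℝ → E} (h : ∀ a b, a < b → F b - F a = ∫ u in a..b, G u) (a b : ℝ) :
    F b - F a = ∫ u in a..b, G u := by
  rcases lt_trichotomy a b with hab | rfl | hab
  · exact h a b hab
  · rw [sub_self, intervalIntegral.integral_same]
  · rw [intervalIntegral.integral_symm, ← h b a hab, neg_sub]

variable {N : ℕ} {K : (Fin N → ℝ) → ℝ} {j : Fin N} {f g : (Fin N → ℝ) → ℝ} {M : ℝ}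

theorem integral_update_eq_sub
    (hftc : ∀ (x : Fin N → ℝ) (a b : ℝ), a < b →
      f (Function.update x j b) - f (Function.update x j a) =
        ∫ u in a..b, g (Function.update x j u))
    (w : ℝ) (k : Fin N → ℤ) :
    ∫ u in ((k j : ℝ) / w)..(((k j : ℝ) + 1) / w),
        g (Function.update (fun i => (k i : ℝ) / w) j u) =
      f (fun i => ((k + Pi.single j 1 : Fin N → ℤ) i : ℝ) / w) - f (fun i => (k i : ℝ) / w) := by
  rw [← sub_eq_intervalIntegral_of_forall_lt (hftc _)]
  have hnext : Function.update (fun i => (k i : ℝ) / w) j (((k j : ℝ) + 1) / w) =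
      fun i => ((k + Pi.single j 1 : Fin N → ℤ) i : ℝ) / w := by
    funext i
    rcases eq_or_ne i j with rfl | hi <;> simp [*]
  rw [hnext, Function.update_eq_self j fun i => (k i : ℝ) / w]

theorem kantOp_update_eq_latticeSeries_sub
    (hK : ∀ y : Fin N → ℝ, Summable fun k : Fin N → ℤ => ‖K (fun i => y i - (k i : ℝ))‖)
    (hf : ∀ t, |f t| ≤ M)
    (hftc : ∀ (x : Fin N → ℝ) (a b : ℝ), a < b →
      f (Function.update x j b) - f (Function.update x j a) =
        ∫ u in a..b, g (Function.update x j u))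
    (w : ℝ) (t : Fin N → ℝ) (s : ℝ) :
    kantOp K j w g (Function.update t j s) =
      w * (latticeSeries K (fun k => f fun i => k i / w)
          (Function.update (w • t) j (w * s + 1)) -
        latticeSeries K (fun k => f fun i => k i / w) (Function.update (w • t) j (w * s))) := by
  have hsum {c : (Fin N → ℤ) → ℝ} (hc : ∀ k, |c k| ≤ M) (y : Fin N → ℝ) :
      Summable fun k : Fin N → ℤ => c k * K (fun i => y i - (k i : ℝ)) :=
    .of_norm_bounded ((hK y).mul_left M) fun k => norm_mul_le_of_le (hc k) le_rfl
  have hshift : Function.update (w • t) j (w * s + 1) = fun i =>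
      Function.update (w • t) j (w * s) i + ((Pi.single j 1 : Fin N → ℤ) i : ℝ) := by
    funext i
    rcases eq_or_ne i j with rfl | hi <;> simp [*]
  have hscale : (fun i => w * Function.update t j s i) = Function.update (w • t) j (w * s) :=
    (Function.update_smul w t j s).symm
  rw [hshift, latticeSeries_add_intCast, latticeSeries, latticeSeries,
    ← (hsum (fun _ => hf _) _).tsum_sub (hsum (fun _ => hf _) _), ← tsum_mul_left, kantOp]
  refine tsum_congr fun k => ?_
  rw [integral_update_eq_sub hftc, ← hscale]
  ring

theorem sum_kantOp_eq_latticeSeries_sub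
    (hK : ∀ y : Fin N → ℝ, Summable fun k : Fin N → ℤ => ‖K (fun i => y i - (k i : ℝ))‖)
    (hf : ∀ t, |f t| ≤ M)
    (hftc : ∀ (x : Fin N → ℝ) (a b : ℝ), a < b →
      f (Function.update x j b) - f (Function.update x j a) =
        ∫ u in a..b, g (Function.update x j u))
    {w : ℝ} (hw : w ≠ 0) (m : ℕ) (t : Fin N → ℝ) :
    ∑ i ∈ Finset.Icc 1 m,
        kantOp K j w g (Function.update t j (t j - ((m : ℝ) - 2 * ((i : ℝ) - 1)) / (2 * w))) =
      w * (latticeSeries K (fun k => f fun i => k i / w)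
          (Function.update (w • t) j (w * t j + m / 2)) -
        latticeSeries K (fun k => f fun i => k i / w)
          (Function.update (w • t) j (w * t j - m / 2))) := by
  set G : ℝ → ℝ := fun u =>
    latticeSeries K (fun k => f fun i => k i / w) (Function.update (w • t) j u)
  have hterm (i : ℕ) :
      kantOp K j w g
          (Function.update t j (t j - ((m : ℝ) - 2 * (((1 + i : ℕ) : ℝ) - 1)) / (2 * w))) =
        w * (G (w * t j - m / 2 + (i + 1 : ℕ)) - G (w * t j - m / 2 + i)) := by
    have hnode : w * (t j - ((m : ℝ) - 2 * (((1 + i : ℕ) : ℝ) - 1)) / (2 * w)) =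
        w * t j - m / 2 + i := by
      push_cast
      field_simp
      ring
    rw [kantOp_update_eq_latticeSeries_sub hK hf hftc, hnode, add_assoc, ← Nat.cast_add_one]
  rw [← Finset.Ico_add_one_right_eq_Icc, Finset.sum_Ico_eq_sum_range, Nat.add_sub_cancel,
    Finset.sum_congr rfl fun i _ => hterm i, ← Finset.mul_sum,
    Finset.sum_range_sub fun i : ℕ => G (w * t j - m / 2 + i)]
  congr 3 <;> ring_nf

end Kantorovich

theorem sampling_series_deriv_eq_kantorovich_general
    (N : ℕ) (χ : Fin N → ℝ → ℝ)
    (hχ : ∀ i, ContinuouslySummable fun (k : ℤ) u => χ i (u - (k : ℝ)))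
    (m : ℕ) (hm : 1 ≤ m) (j : Fin N)
    (f : (Fin N → ℝ) → ℝ) (M : ℝ) (hf : ∀ t, |f t| ≤ M)
    (g : (Fin N → ℝ) → ℝ)
    (hftc : ∀ (x : Fin N → ℝ) (a b : ℝ), a < b →
      f (Function.update x j b) - f (Function.update x j a) =
        ∫ u in a..b, g (Function.update x j u))
    (t : Fin N → ℝ) (w : ℝ) (hw : w ≠ 0) :
    HasDerivAt
      (fun s : ℝ => ∑' k : Fin N → ℤ, f (fun i => (k i : ℝ) / w) *
        ∏ i, avgKernel (χ i) m (w * Function.update t j s i - (k i : ℝ)))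
      ((1 / (m : ℝ)) * ∑ i ∈ Finset.Icc 1 m,
        kantOp (fun s : Fin N → ℝ =>
            χ j (s j) * ∏ l ∈ Finset.univ.erase j, avgKernel (χ l) m (s l)) j w g
          (Function.update t j (t j - ((m : ℝ) - 2 * ((i : ℝ) - 1)) / (2 * w))))
      (t j) := by
  have hderiv := (hasDerivAt_latticeSeries_prod_avgKernel (m := m) (j := j) hχ
    (fun k : Fin N → ℤ => hf fun i => k i / w) (w • t) (w * t j)).comp (t j)
      ((hasDerivAt_id (t j)).const_mul w)
  have hsum := sum_kantOp_eq_latticeSeries_sub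
    (fun y => (continuouslySummable_mixedKernel hχ m j).summable_norm y) hf hftc hw m t
  refine (hderiv.congr_deriv ?_).congr_of_eventuallyEq (.of_forall fun s => ?_)
  · rw [mul_one, mul_assoc, mul_comm _ w, ← hsum]
    rfl
  · exact congrArg
      (latticeSeries (fun s => ∏ i, avgKernel (χ i) m (s i)) fun k => f fun i => k i / w)
      (Function.update_smul w t j s).symm

/-- for continuous one-dimensional kernels `χ_1,…,χ_N`, `m ≥ 1`, `f` bounded whose
`j`-th sections are primitives of `g` (i.e. `f(x'_j,b) − f(x'_j,a) = ∫_a^b g(x'_j,u) du`), the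
`j`-th partial derivative of the multivariate generalized sampling series `S̄^m_w f` based on the
product averaged kernel equals
`(1/m) ∑_{i=1}^m (K_{w,j} g)(t'_j, t_j − (m − 2(i−1))/(2w))`,
where `K_{w,j}` is the sampling-Kantorovich operator with kernel
`χ^{(j)}(t) = χ_j(t_j) ∏_{i≠j} χ̄_{i,m}(t_i)`. -/
theorem sampling_series_deriv_eq_kantorovich
    (N : ℕ) (χ : Fin N → ℝ → ℝ)
    (hc : ∀ i, Continuous (χ i)) (hint : ∀ i, Integrable (χ i))
    (hpart : ∀ i, ∀ u : ℝ, HasSum (fun k : ℤ => χ i (u - (k : ℝ))) 1)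
    (hsummable : ∀ i, ∀ u : ℝ, Summable fun k : ℤ => |χ i (u - (k : ℝ))|)
    (hunif : ∀ i, ∀ K : Set ℝ, IsCompact K →
      TendstoUniformlyOn (fun (s : Finset ℤ) (u : ℝ) => ∑ k ∈ s, |χ i (u - (k : ℝ))|)
        (fun u => ∑' k : ℤ, |χ i (u - (k : ℝ))|) Filter.atTop K)
    (hbdd : ∀ i, BddAbove (Set.range fun u : ℝ => ∑' k : ℤ, |χ i (u - (k : ℝ))|))
    (m : ℕ) (hm : 1 ≤ m) (j : Fin N)
    (f : (Fin N → ℝ) → ℝ) (M : ℝ) (hf : ∀ t, |f t| ≤ M)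
    (g : (Fin N → ℝ) → ℝ) (hg : Measurable g)
    (hftc : ∀ (x : Fin N → ℝ) (a b : ℝ), a < b →
      f (Function.update x j b) - f (Function.update x j a) =
        ∫ u in a..b, g (Function.update x j u))
    (t : Fin N → ℝ) (w : ℝ) (hw : 0 < w) :
    HasDerivAt
      (fun s : ℝ => ∑' k : Fin N → ℤ, f (fun i => (k i : ℝ) / w) *
        ∏ i, avgKernel (χ i) m (w * Function.update t j s i - (k i : ℝ)))
      ((1 / (m : ℝ)) * ∑ i ∈ Finset.Icc 1 m,
        kantOp (fun s : Fin N → ℝ =>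
            χ j (s j) * ∏ l ∈ Finset.univ.erase j, avgKernel (χ l) m (s l)) j w g
          (Function.update t j (t j - ((m : ℝ) - 2 * ((i : ℝ) - 1)) / (2 * w))))
      (t j) :=
  sampling_series_deriv_eq_kantorovich_general N χ
    (fun i => .of_tendstoUniformlyOn (fun k => (hc i).comp (continuous_sub_right (k : ℝ)))
      (hunif i)) m hm j f M hf g hftc t w hw.ne'
end

section
/- Let χ : ℝ^N → ℝ be bounded and measurable with χ(t) = 0 for t ∉ [−T,T]^N (some T > 0) and ∑_{k∈ℤ^N} χ(u−k) = 1 for every u ∈ ℝ^N; set A_χ := sup_u ∑_{k∈ℤ^N} |χ(u−k)|. Let 1 ≤ p < +∞ and let f : ℝ^N → ℝ be bounded, measurable and continuous at almost every point of ℝ^N. For δ > 0 let ω(f;x,δ) := sup{ |f(u) − f(v)| : u, v ∈ ∏_{i=1}^N [x_i − δ, x_i + δ] }. Then for every j ∈ {1,…,N} and every w > 0, ‖K_{w,j} f − f‖_{L^p(ℝ^N)} ≤ A_χ ‖ω(f; ·, (T+1)/w)‖_{L^p(ℝ^N)}. -/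
open MeasureTheory
open scoped ENNReal

/-- The local (first-order) modulus of smoothness
`ω(f; x, δ) = sup { |f(u) − f(v)| : u, v ∈ ∏ᵢ [xᵢ − δ, xᵢ + δ] }`. -/
noncomputable def localOsc {N : ℕ} (f : (Fin N → ℝ) → ℝ) (x : Fin N → ℝ) (δ : ℝ) : ℝ :=
  sSup {d : ℝ | ∃ u v : Fin N → ℝ,
    (∀ i, u i ∈ Set.Icc (x i - δ) (x i + δ)) ∧
    (∀ i, v i ∈ Set.Icc (x i - δ) (x i + δ)) ∧ d = |f u - f v|}

/-! Since the translates of `χ` sum to `1`, `K_{w,j} f(t) − f(t)` is the `χ(wt − k)`-weighted sum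
of the differences between the mean of `f` over the grid edge `k/w + [0, 1/w] eⱼ` and `f(t)`. Only
nodes with `|wt − k|_∞ ≤ T` contribute; their edges lie in the cube of half-side `(T + 1)/w` around
`t`, so each difference is at most `ω(f; t, (T + 1)/w)`. It remains to take `L^p` norms in
`|K_{w,j} f(t) − f(t)| ≤ A_χ ω(f; t, (T + 1)/w)`. -/

open Metric Function Bornology

section WeightedSum

variable {κ E : Type*} [NormedAddCommGroup E] [NormedSpace ℝ E] [CompleteSpace E]

theorem norm_tsum_smul_sub_le {a : κ → ℝ} (ha : HasSum a 1) {v : κ → E} {c : E} {ε : ℝ}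
    (hv : ∀ k ∈ support a, ‖v k - c‖ ≤ ε) :
    ‖∑' k, a k • v k - c‖ ≤ (∑' k, |a k|) * ε := by
  have hbound (k : κ) : ‖a k • (v k - c)‖ ≤ |a k| * ε := by
    by_cases hk : a k = 0
    · simp [hk]
    · rw [norm_smul, Real.norm_eq_abs]
      gcongr
      exact hv k hk
  have hmaj : Summable fun k => |a k| * ε := ha.summable.abs.mul_right ε
  have hdiff : HasSum (fun k => a k • (v k - c)) (∑' k, a k • (v k - c)) :=
    (hmaj.of_norm_bounded hbound).hasSum
  have hsum : ∑' k, a k • v k = ∑' k, a k • (v k - c) + c := by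
    simpa [← smul_add] using (hdiff.add (ha.smul_const c)).tsum_eq
  rw [hsum, add_sub_cancel_right]
  exact tsum_of_norm_bounded (ha.summable.abs.hasSum.mul_right ε) hbound

end WeightedSum

section LatticeTranslates

theorem card_Icc_ceil_sub_floor_add_le {R : Type*} [Ring R] [LinearOrder R] [IsStrictOrderedRing R]
    [FloorRing R] (x r : R) :
    (Finset.Icc ⌈x - r⌉ ⌊x + r⌋).card ≤ ⌊2 * r⌋₊ + 1 := by
  have hfloor : ⌊x + r⌋ - ⌈x - r⌉ ≤ ⌊2 * r⌋ := by
    rw [Int.le_floor, Int.cast_sub]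
    calc (⌊x + r⌋ : R) - ⌈x - r⌉ ≤ x + r - (x - r) :=
          sub_le_sub (Int.floor_le _) (Int.le_ceil _)
      _ = 2 * r := by rw [two_mul]; abel
  have htoNat : ⌊2 * r⌋ ≤ (⌊2 * r⌋₊ : ℤ) := Int.self_le_toNat _
  rw [Int.card_Icc]
  lia

variable {ι : Type*} [Fintype ι]

theorem exists_finset_card_le_of_sub_intCast_mem_closedBall (T : ℝ) (u : ι → ℝ) :
    ∃ S : Finset (ι → ℤ), S.card ≤ (⌊2 * T⌋₊ + 1) ^ Fintype.card ι ∧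
      ∀ k : ι → ℤ, (fun i => u i - (k i : ℝ)) ∈ closedBall 0 T → k ∈ S := by
  classical
  refine ⟨Fintype.piFinset fun i => Finset.Icc ⌈u i - T⌉ ⌊u i + T⌋, ?_, fun k hk => ?_⟩
  · rw [Fintype.card_piFinset]
    exact Finset.prod_le_pow_card _ _ _ fun i _ => card_Icc_ceil_sub_floor_add_le (u i) T
  · rw [Fintype.mem_piFinset]
    intro i
    have hi : |u i - k i| ≤ T := (norm_le_pi_norm _ i).trans (mem_closedBall_zero_iff.1 hk)
    rw [abs_le] at hi
    rw [Finset.mem_Icc, Int.ceil_le, Int.le_floor]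
    constructor <;> linarith

theorem bddAbove_range_tsum_abs_sub_intCast {χ : (ι → ℝ) → ℝ} {T C : ℝ}
    (hsupp : support χ ⊆ closedBall 0 T) (hC : ∀ s, |χ s| ≤ C) :
    BddAbove (Set.range fun u : ι → ℝ => ∑' k : ι → ℤ, |χ fun i => u i - (k i : ℝ)|) := by
  have hC0 : 0 ≤ C := (abs_nonneg _).trans (hC 0)
  refine ⟨((⌊2 * T⌋₊ + 1) ^ Fintype.card ι : ℕ) * C, ?_⟩
  rintro _ ⟨u, rfl⟩
  obtain ⟨S, hcard, hS⟩ := exists_finset_card_le_of_sub_intCast_mem_closedBall T u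
  have hzero (k : ι → ℤ) (hk : k ∉ S) : |χ fun i => u i - (k i : ℝ)| = 0 := by
    rw [abs_eq_zero]
    exact notMem_support.1 fun h => hk (hS k (hsupp h))
  calc ∑' k : ι → ℤ, |χ fun i => u i - (k i : ℝ)|
      = ∑ k ∈ S, |χ fun i => u i - (k i : ℝ)| := tsum_eq_sum hzero
    _ ≤ S.card • C := Finset.sum_le_card_nsmul _ _ _ fun k _ => hC _
    _ = S.card * C := nsmul_eq_mul _ _
    _ ≤ ((⌊2 * T⌋₊ + 1) ^ Fintype.card ι : ℕ) * C := by gcongr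

end LatticeTranslates

section Cube

variable {ι : Type*} [Fintype ι]

theorem mem_closedBall_iff_forall_mem_Icc {u x : ι → ℝ} {δ : ℝ} (hδ : 0 ≤ δ) :
    u ∈ closedBall x δ ↔ ∀ i, u i ∈ Set.Icc (x i - δ) (x i + δ) := by
  simp only [closedBall_pi x hδ, Set.mem_univ_pi, Real.closedBall_eq_Icc]

theorem dist_update_self [DecidableEq ι] {X : ι → Type*} [∀ i, PseudoMetricSpace (X i)]
    (x : ∀ i, X i) (j : ι) (a : X j) : dist (update x j a) x = dist a (x j) := by
  refine le_antisymm ((dist_pi_le_iff dist_nonneg).2 fun i => ?_) ?_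
  · obtain rfl | hij := eq_or_ne i j
    · rw [update_self]
    · rw [update_of_ne hij, dist_self]
      exact dist_nonneg
  · simpa only [update_self] using dist_le_pi_dist (update x j a) x j

theorem update_mem_closedBall_of_mem_Icc [DecidableEq ι] {w T : ℝ} (hw : 0 < w) {t : ι → ℝ}
    {k : ι → ℤ} (hk : (fun i => w * t i - (k i : ℝ)) ∈ closedBall 0 T) {j : ι} {u : ℝ}
    (hu : u ∈ Set.Icc ((k j : ℝ) / w) (((k j : ℝ) + 1) / w)) :
    update (fun i => (k i : ℝ) / w) j u ∈ closedBall t ((T + 1) / w) := by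
  have hedge : dist (update (fun i => (k i : ℝ) / w) j u) (fun i => (k i : ℝ) / w) ≤ 1 / w := by
    rw [dist_update_self, Real.dist_eq, abs_of_nonneg (sub_nonneg.2 hu.1), sub_le_iff_le_add,
      ← add_div, add_comm]
    exact hu.2
  have hnode : dist (fun i => (k i : ℝ) / w) t ≤ T / w := by
    have hscale : t - (fun i => (k i : ℝ) / w) = w⁻¹ • fun i => w * t i - (k i : ℝ) := by
      ext i
      simp only [Pi.sub_apply, Pi.smul_apply, smul_eq_mul]
      field_simp
    rw [dist_comm, dist_eq_norm, hscale, norm_smul, norm_inv, Real.norm_of_nonneg hw.le,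
      inv_mul_eq_div]
    gcongr
    exact mem_closedBall_zero_iff.1 hk
  calc dist (update (fun i => (k i : ℝ) / w) j u) t
      ≤ 1 / w + T / w := (dist_triangle _ _ _).trans (add_le_add hedge hnode)
    _ = (T + 1) / w := by ring

end Cube

section Operator

variable {N : ℕ}

theorem localOsc_nonneg (f : (Fin N → ℝ) → ℝ) (x : Fin N → ℝ) (δ : ℝ) : 0 ≤ localOsc f x δ := by
  refine Real.sSup_nonneg ?_
  rintro _ ⟨u, v, -, -, rfl⟩
  exact abs_nonneg _

theorem abs_sub_le_localOsc {f : (Fin N → ℝ) → ℝ} {x u v : Fin N → ℝ} {δ : ℝ}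
    (hf : IsBounded (f '' closedBall x δ)) (hu : u ∈ closedBall x δ) (hv : v ∈ closedBall x δ) :
    |f u - f v| ≤ localOsc f x δ := by
  have hδ : 0 ≤ δ := dist_nonneg.trans hu
  obtain ⟨D, hD⟩ := isBounded_iff.1 hf
  simp only [localOsc, ← mem_closedBall_iff_forall_mem_Icc hδ]
  refine le_csSup ⟨D, ?_⟩ ⟨u, v, hu, hv, rfl⟩
  rintro _ ⟨y, z, hy, hz, rfl⟩
  exact hD (Set.mem_image_of_mem f hy) (Set.mem_image_of_mem f hz)

/-- The coefficient of `χ(wt − k)` in the operator `kantOp χ j w f`: the mean of `f` over the grid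
edge of length `1 / w` that starts at the node `k / w` in direction `j`, written as in `kantOp`. -/
noncomputable def edgeMean (j : Fin N) (w : ℝ) (f : (Fin N → ℝ) → ℝ) (k : Fin N → ℤ) : ℝ :=
  w * ∫ u in ((k j : ℝ) / w)..(((k j : ℝ) + 1) / w), f (update (fun i => (k i : ℝ) / w) j u)

theorem edgeMean_eq_intervalAverage (j : Fin N) (w : ℝ) (f : (Fin N → ℝ) → ℝ) (k : Fin N → ℤ) :
    edgeMean j w f k =
      ⨍ u in ((k j : ℝ) / w)..(((k j : ℝ) + 1) / w), f (update (fun i => (k i : ℝ) / w) j u) := by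
  rw [interval_average_eq, ← sub_div, add_sub_cancel_left, one_div, inv_inv, smul_eq_mul, edgeMean]

theorem abs_edgeMean_sub_le_localOsc {f : (Fin N → ℝ) → ℝ} (hfm : Measurable f) {w T : ℝ}
    (hw : 0 < w) {t : Fin N → ℝ} {k : Fin N → ℤ}
    (hf : IsBounded (f '' closedBall t ((T + 1) / w)))
    (hk : (fun i => w * t i - (k i : ℝ)) ∈ closedBall 0 T) (j : Fin N) :
    |edgeMean j w f k - f t| ≤ localOsc f t ((T + 1) / w) := by
  let g : ℝ → ℝ := fun u => f (update (fun i => (k i : ℝ) / w) j u)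
  have hlt : (k j : ℝ) / w < ((k j : ℝ) + 1) / w := by gcongr; exact lt_add_one _
  have hT : 0 ≤ T := dist_nonneg.trans hk
  have ht : t ∈ closedBall t ((T + 1) / w) := mem_closedBall_self (by positivity)
  have hosc : ∀ u ∈ Set.uIoc ((k j : ℝ) / w) (((k j : ℝ) + 1) / w),
      g u ∈ closedBall (f t) (localOsc f t ((T + 1) / w)) := fun u hu =>
    have hu' := Set.Ioc_subset_Icc_self (Set.uIoc_of_le hlt.le ▸ hu)
    abs_sub_le_localOsc hf (update_mem_closedBall_of_mem_Icc hw hk hu') ht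
  have hint : IntegrableOn g (Set.uIoc ((k j : ℝ) / w) (((k j : ℝ) + 1) / w)) := by
    refine .of_bound (by simp) (hfm.comp (measurable_update _)).aestronglyMeasurable
      (‖f t‖ + localOsc f t ((T + 1) / w)) ?_
    exact ae_restrict_of_forall_mem measurableSet_uIoc fun u hu =>
      norm_le_of_mem_closedBall (hosc u hu)
  have hmem := (convex_closedBall (f t) _).set_average_mem isClosed_closedBall
    (by simp [hlt.le, hlt]) (by simp) (ae_restrict_of_forall_mem measurableSet_uIoc hosc) hint
  rwa [edgeMean_eq_intervalAverage, ← Real.dist_eq]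

theorem abs_kantOp_sub_le {χ : (Fin N → ℝ) → ℝ} {T : ℝ} (hsupp : support χ ⊆ closedBall 0 T)
    {f : (Fin N → ℝ) → ℝ} (hfm : Measurable f) {w : ℝ} (hw : 0 < w) {t : Fin N → ℝ}
    (hf : IsBounded (f '' closedBall t ((T + 1) / w)))
    (hsum : HasSum (fun k : Fin N → ℤ => χ fun i => w * t i - (k i : ℝ)) 1) (j : Fin N) :
    |kantOp χ j w f t - f t| ≤
      (∑' k : Fin N → ℤ, |χ fun i => w * t i - (k i : ℝ)|) * localOsc f t ((T + 1) / w) := by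
  have hkant : kantOp χ j w f t =
      ∑' k : Fin N → ℤ, (χ fun i => w * t i - (k i : ℝ)) • edgeMean j w f k :=
    tsum_congr fun k => mul_comm _ _
  rw [hkant]
  exact norm_tsum_smul_sub_le hsum fun k hk =>
    (Real.norm_eq_abs _).trans_le (abs_edgeMean_sub_le_localOsc hfm hw hf (hsupp hk) j)

theorem kantorovich_Lp_tau_modulus_estimate_general {χ : (Fin N → ℝ) → ℝ} {T : ℝ}
    (hsupp : support χ ⊆ closedBall 0 T)
    (hpart : ∀ u : Fin N → ℝ, HasSum (fun k : Fin N → ℤ => χ fun i => u i - (k i : ℝ)) 1)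
    (hA : BddAbove (Set.range fun u : Fin N → ℝ => ∑' k : Fin N → ℤ, |χ fun i => u i - (k i : ℝ)|))
    {f : (Fin N → ℝ) → ℝ} (hfm : Measurable f) (hf : ∀ s, IsBounded s → IsBounded (f '' s))
    (p : ℝ≥0∞) (j : Fin N) {w : ℝ} (hw : 0 < w) :
    eLpNorm (fun t => kantOp χ j w f t - f t) p volume ≤
      ENNReal.ofReal (⨆ u : Fin N → ℝ, ∑' k : Fin N → ℤ, |χ fun i => u i - (k i : ℝ)|) *
        eLpNorm (fun x => localOsc f x ((T + 1) / w)) p volume := by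
  refine eLpNorm_le_mul_eLpNorm_of_ae_le_mul (.of_forall fun t => ?_) p
  rw [Real.norm_eq_abs, Real.norm_of_nonneg (localOsc_nonneg _ _ _)]
  refine (abs_kantOp_sub_le hsupp hfm hw (hf _ isBounded_closedBall) (hpart _) j).trans ?_
  gcongr
  · exact localOsc_nonneg _ _ _
  · exact le_ciSup hA fun i => w * t i

end Operator

/-- for a bounded measurable kernel `χ : ℝ^N → ℝ` supported in `[−T,T]^N` with
`∑_{k∈ℤ^N} χ(u−k) = 1` for all `u`, `1 ≤ p < ∞`, and `f` bounded, measurable and continuous at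
almost every point, one has `‖K_{w,j} f − f‖_p ≤ A_χ ‖ω(f; ·, (T+1)/w)‖_p`. -/
theorem kantorovich_Lp_tau_modulus_estimate
    (N : ℕ) (T : ℝ) (hT : 0 < T) (χ : (Fin N → ℝ) → ℝ)
    (hχm : Measurable χ) (C : ℝ) (hχb : ∀ s, |χ s| ≤ C)
    (hsupp : ∀ s : Fin N → ℝ, (¬ ∀ i, s i ∈ Set.Icc (-T) T) → χ s = 0)
    (hpart : ∀ u : Fin N → ℝ, HasSum (fun k : Fin N → ℤ => χ (fun i => u i - (k i : ℝ))) 1)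
    (p : ℝ≥0∞) (hp1 : 1 ≤ p) (hp2 : p ≠ ⊤)
    (f : (Fin N → ℝ) → ℝ) (hfm : Measurable f) (M : ℝ) (hfb : ∀ s, |f s| ≤ M)
    (hfc : ∀ᵐ x : Fin N → ℝ, ContinuousAt f x)
    (j : Fin N) (w : ℝ) (hw : 0 < w) :
    eLpNorm (fun t => kantOp χ j w f t - f t) p volume ≤
      ENNReal.ofReal (⨆ u : Fin N → ℝ, ∑' k : Fin N → ℤ, |χ (fun i => u i - (k i : ℝ))|) *
        eLpNorm (fun x => localOsc f x ((T + 1) / w)) p volume := by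
  have hsupp' : support χ ⊆ closedBall 0 T := fun s hs =>
    (mem_closedBall_iff_forall_mem_Icc hT.le).2 <| by
      simpa only [Pi.zero_apply, zero_sub, zero_add] using not_imp_comm.1 (hsupp s) hs
  have hf (s : Set (Fin N → ℝ)) (_ : IsBounded s) : IsBounded (f '' s) :=
    isBounded_iff_forall_norm_le.2 ⟨M, Set.forall_mem_image.2 fun x _ => hfb x⟩
  exact kantorovich_Lp_tau_modulus_estimate_general hsupp' hpart
    (bddAbove_range_tsum_abs_sub_intCast hsupp' hχb) hfm hf p j hw
end
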